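/- arXiv:1403.2852 — 3 statements merged into one kernel-verified Lean document; each statement's English description precedes it below -/
import Mathlib

section
/- Let x ∈ H^s for some s>0 and let y be the bounding sequence for x. Suppose that g_n is non-decreasing, that g_n 2^{-sn} is eventually non-increasing, and that ∑_{n≥1} g_n^{-1} = ∞. Then the coefficients c_n := C_n(y_{n-1}^{1/2}) = (1 + 1/((1/2) g_n ‖φ‖_{ℓ^∞} y_{n-1}^{1/2}))^{-1} tend to 0 as n → ∞. -/
open scoped BigOperators ENNReal
open MeasureTheory Filter Set Topology

/-- `kₙ = 2^{βn}`. -/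
noncomputable def kk (β : ℝ) (n : ℕ) : ℝ := (2 : ℝ) ^ (β * n)

/-- `x ∈ Hˢ`, i.e. `∑_{n≥1} 2^{2sn} xₙ² < ∞`. -/
def MemHs (s : ℝ) (x : ℕ → ℝ) : Prop :=
  Summable (fun n : ℕ => (2 : ℝ) ^ (2 * s * ((n : ℝ) + 1)) * (x (n + 1)) ^ 2)

/-- `‖φ‖_{ℓ^∞} = sup_{n≥1} |φₙ|`. -/
noncomputable def phiNorm (φ : ℕ → ℝ) : ℝ := ⨆ n : ℕ, |φ (n + 1)|

/-- For `gₙ, Φ, v > 0` this is exactly `Cₙ(v) = (1 + 1/((1/2) gₙ Φ v))⁻¹`. -/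
noncomputable def Cfun (Φ : ℝ) (g : ℕ → ℝ) (n : ℕ) (v : ℝ) : ℝ :=
  (g n * Φ * v / 2) / (1 + g n * Φ * v / 2)

/-- `∑_{i ≥ n} xᵢ²`. -/
noncomputable def tail2 (x : ℕ → ℝ) (n : ℕ) : ℝ := ∑' i : ℕ, (x (n + i)) ^ 2

/-- The bounding sequence for `x`: `y₁ = y₂ = 2‖x‖_H²` and
`y_{n+2} = C_{n+2}(√y_{n+1}) yₙ + ∑_{i ≥ n+2} xᵢ²`. -/
noncomputable def boundSeq (Φ : ℝ) (g x : ℕ → ℝ) : ℕ → ℝ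
  | 0 => 0
  | 1 => 2 * tail2 x 1
  | 2 => 2 * tail2 x 1
  | n + 3 =>
      Cfun Φ g (n + 3) (Real.sqrt (boundSeq Φ g x (n + 2))) * boundSeq Φ g x (n + 1)
        + tail2 x (n + 3)

/-!
Taking square roots, `r_n = √y_n` satisfies `r_{n+2} ≤ √(z / (1 + z)) r_n + e_n` with
`z = (1/2) g_{n+2} ‖φ‖ r_{n+1}` and a summable error `e_n`. Since
`√(z / (1 + z)) ≤ 1 - 1 / (2(1 + z))`, telescoping bounds the sum of the losses `r_n / (1 + z)`.
If two consecutive products `g_{n+1} r_n` were not simultaneously small infinitely often, then one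
of two consecutive losses would always be at least a constant times `1 / g_{n+3}`, contradicting
the divergence of `∑ 1 / g_n`. Once two consecutive products are small they remain so: the damping
factor is then at most `√z`, which beats the at most geometric growth of `g`, and `g_n e_n → 0`
because `x ∈ Hˢ` gives `e_n = o(2^{-sn})` while `g_n = O(2^{sn})`.
-/

theorem summable_of_le_sub_succ_add {t u e : ℕ → ℝ} (ht : ∀ n, 0 ≤ t n) (hu : ∀ n, 0 ≤ u n)
    (he : Summable e) (htu : ∀ n, t n ≤ u n - u (n + 1) + e n) : Summable t := by
  obtain ⟨E, hE⟩ := he.hasSum.tendsto_sum_nat.bddAbove_range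
  refine summable_of_sum_range_le (c := u 0 + E) ht fun n => ?_
  calc ∑ i ∈ Finset.range n, t i
      ≤ ∑ i ∈ Finset.range n, (u i - u (i + 1) + e i) := Finset.sum_le_sum fun i _ => htu i
    _ = u 0 - u n + ∑ i ∈ Finset.range n, e i := by
        rw [Finset.sum_add_distrib, Finset.sum_range_sub']
    _ ≤ u 0 + E := add_le_add (sub_le_self _ (hu n)) (hE ⟨n, rfl⟩)

theorem frequently_lt_of_summable_mul {u v : ℕ → ℝ} (hu : ∀ n, 0 ≤ u n) (hdiv : ¬ Summable u)
    (huv : Summable fun n => u n * v n) {η : ℝ} (hη : 0 < η) : ∃ᶠ n in atTop, v n < η := by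
  intro hv
  refine hdiv (summable_of_isBigO_nat huv (.of_bound η⁻¹ ?_))
  filter_upwards [hv] with n hn
  have hηv : η ≤ v n := not_lt.1 hn
  rw [Real.norm_of_nonneg (hu n), Real.norm_of_nonneg (mul_nonneg (hu n) (hη.le.trans hηv)),
    le_inv_mul_iff₀ hη, mul_comm]
  exact mul_le_mul_of_nonneg_left hηv (hu n)

theorem eventually_of_frequently_of_succ {P : ℕ → Prop} (hfreq : ∃ᶠ n in atTop, P n)
    (hsucc : ∀ᶠ n in atTop, P n → P (n + 1)) : ∀ᶠ n in atTop, P n := by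
  obtain ⟨N, hN⟩ := eventually_atTop.1 hsucc
  obtain ⟨m, hNm, hm⟩ := frequently_atTop.1 hfreq N
  exact eventually_atTop.2
    ⟨m, fun n hmn => Nat.le_induction hm (fun k hmk => hN k (hNm.trans hmk)) n hmn⟩

theorem sqrt_add_le_add_sqrt {a b : ℝ} (ha : 0 ≤ a) (hb : 0 ≤ b) : √(a + b) ≤ √a + √b := by
  simpa only [Real.sqrt_eq_rpow] using
    Real.rpow_add_le_add_rpow ha hb one_half_pos.le one_half_lt_one.le

theorem sqrt_div_one_add_le {z : ℝ} (hz : 0 ≤ z) : √(z / (1 + z)) ≤ 1 - (1 + z)⁻¹ / 2 := by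
  have hinv : (1 + z)⁻¹ ≤ 1 := inv_le_one_of_one_le₀ (by linarith)
  calc √(z / (1 + z)) = √(1 + -(1 + z)⁻¹) := by congr 1; field_simp; ring
    _ ≤ 1 + -(1 + z)⁻¹ / 2 := Real.sqrt_one_add_le (by linarith)
    _ = 1 - (1 + z)⁻¹ / 2 := by ring

/-- The inequality satisfied by the square roots of a bounding sequence: `r n` stands for
`√y_{n+1}`, the weight `h n` for `(1/2) g_{n+1} ‖φ‖`, and the error `e n` for
`(∑_{i ≥ n+3} xᵢ²)^{1/2}`. -/
structure IsDampedRecursion (h r e : ℕ → ℝ) : Prop where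
  weight_pos : ∀ n, 0 < h n
  nonneg : ∀ n, 0 ≤ r n
  le_add : ∀ n,
    r (n + 2) ≤ √(h (n + 2) * r (n + 1) / (1 + h (n + 2) * r (n + 1))) * r n + e n

/-- Twice the guaranteed decrease of `r` over two steps, up to the error `e n`:
`√(z / (1 + z)) r_n ≤ r_n - dissipation h r n / 2` for `z = h_{n+2} r_{n+1}`. -/
noncomputable def dissipation (h r : ℕ → ℝ) (n : ℕ) : ℝ := r n / (1 + h (n + 2) * r (n + 1))

namespace IsDampedRecursion

variable {h r e : ℕ → ℝ}

theorem weight_mul_nonneg (H : IsDampedRecursion h r e) (m n : ℕ) : 0 ≤ h m * r n :=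
  mul_nonneg (H.weight_pos m).le (H.nonneg n)

theorem dissipation_nonneg (H : IsDampedRecursion h r e) (n : ℕ) : 0 ≤ dissipation h r n :=
  div_nonneg (H.nonneg n) (add_nonneg zero_le_one (H.weight_mul_nonneg _ _))

theorem add_two_le_sub_dissipation (H : IsDampedRecursion h r e) (n : ℕ) :
    r (n + 2) ≤ r n - dissipation h r n / 2 + e n := by
  calc r (n + 2)
      ≤ √(h (n + 2) * r (n + 1) / (1 + h (n + 2) * r (n + 1))) * r n + e n := H.le_add n
    _ ≤ (1 - (1 + h (n + 2) * r (n + 1))⁻¹ / 2) * r n + e n := by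
        gcongr
        · exact H.nonneg n
        · exact sqrt_div_one_add_le (H.weight_mul_nonneg _ _)
    _ = r n - dissipation h r n / 2 + e n := by rw [dissipation]; ring

theorem summable_dissipation (H : IsDampedRecursion h r e) (he : Summable e) :
    Summable (dissipation h r) := by
  refine (summable_div_const_iff (two_ne_zero (α := ℝ))).1 <|
    summable_of_le_sub_succ_add (u := fun n => r n + r (n + 1))
      (fun n => div_nonneg (H.dissipation_nonneg n) zero_le_two)
      (fun n => add_nonneg (H.nonneg n) (H.nonneg (n + 1))) he fun n => ?_
  linarith [H.add_two_le_sub_dissipation n]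

theorem max_div_le_dissipation_add (H : IsDampedRecursion h r e) (hmono : Monotone h) {n : ℕ}
    (hen : h (n + 3) * e n ≤ 1) :
    max (r n) (r (n + 1)) / (2 + h (n + 3) * max (r n) (r (n + 1))) ≤
      dissipation h r n + dissipation h r (n + 1) := by
  have hweight : 0 ≤ h (n + 3) := (H.weight_pos _).le
  have hden (m k : ℕ) : 0 < 1 + h m * r k := by linarith [H.weight_mul_nonneg m k]
  rcases le_total (r (n + 1)) (r n) with hr | hr
  · rw [max_eq_left hr]
    have hz : h (n + 2) * r (n + 1) ≤ h (n + 3) * r n :=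
      mul_le_mul (hmono (Nat.le_succ _)) hr (H.nonneg _) hweight
    refine le_add_of_le_of_nonneg ?_ (H.dissipation_nonneg _)
    exact div_le_div_of_nonneg_left (H.nonneg n) (hden _ _) (by linarith)
  · rw [max_eq_right hr]
    have hr_next : r (n + 2) ≤ r (n + 1) + e n := by
      linarith [H.add_two_le_sub_dissipation n, H.dissipation_nonneg n]
    have hz : h (n + 3) * r (n + 2) ≤ 1 + h (n + 3) * r (n + 1) := by
      linarith [mul_le_mul_of_nonneg_left hr_next hweight]
    refine le_add_of_nonneg_of_le (H.dissipation_nonneg _) ?_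
    exact div_le_div_of_nonneg_left (H.nonneg _) (hden _ _) (by linarith)

theorem summable_max_div (H : IsDampedRecursion h r e) (hmono : Monotone h)
    (he : Summable e) (hhe : Tendsto (fun n => h (n + 3) * e n) atTop (𝓝 0)) :
    Summable fun n => max (r n) (r (n + 1)) / (2 + h (n + 3) * max (r n) (r (n + 1))) := by
  have hdiss := H.summable_dissipation he
  refine .of_norm_bounded_eventually_nat (hdiss.add ((summable_nat_add_iff 1).2 hdiss)) ?_
  filter_upwards [hhe.eventually_le_const one_pos] with n hen
  have hmax : 0 ≤ max (r n) (r (n + 1)) := le_max_of_le_left (H.nonneg n)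
  have hweight := H.weight_pos (n + 3)
  rw [Real.norm_of_nonneg (by positivity)]
  exact H.max_div_le_dissipation_add hmono hen

theorem frequently_weight_mul_max_lt (H : IsDampedRecursion h r e) (hmono : Monotone h)
    (he : Summable e) (hhe : Tendsto (fun n => h (n + 3) * e n) atTop (𝓝 0))
    (hdiv : ¬ Summable fun n => (h n)⁻¹) {η : ℝ} (hη : 0 < η) :
    ∃ᶠ n in atTop, h (n + 3) * max (r n) (r (n + 1)) < η := by
  have hsum : Summable fun n => (h (n + 3))⁻¹ *
      (h (n + 3) * max (r n) (r (n + 1)) / (2 + h (n + 3) * max (r n) (r (n + 1)))) :=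
    (H.summable_max_div hmono he hhe).congr fun n => by
      rw [mul_div_assoc, inv_mul_cancel_left₀ (H.weight_pos _).ne']
  have hdiv_tail : ¬ Summable fun n => (h (n + 3))⁻¹ := (summable_nat_add_iff 3).not.2 hdiv
  have hfreq := frequently_lt_of_summable_mul (fun n => inv_nonneg.2 (H.weight_pos _).le)
    hdiv_tail hsum (η := η / (2 + η)) (by positivity)
  refine hfreq.mono fun n hn => ?_
  have hmax : 0 ≤ h (n + 3) * max (r n) (r (n + 1)) :=
    mul_nonneg (H.weight_pos _).le (le_max_of_le_left (H.nonneg n))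
  rw [div_lt_div_iff₀ (by positivity) (by positivity)] at hn
  linarith

theorem weight_mul_add_two_le (H : IsDampedRecursion h r e) {B δ : ℝ} {n : ℕ}
    (hgrowth : h (n + 3) ≤ B * h (n + 1)) (hδ : B * √δ ≤ 1 / 2)
    (hn : h (n + 2) * r (n + 1) ≤ δ) :
    h (n + 3) * r (n + 2) ≤ h (n + 1) * r n / 2 + h (n + 3) * e n := by
  have hz := H.weight_mul_nonneg (n + 2) (n + 1)
  have hdamp : √(h (n + 2) * r (n + 1) / (1 + h (n + 2) * r (n + 1))) ≤ √δ :=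
    Real.sqrt_le_sqrt ((div_le_self hz (by linarith)).trans hn)
  have hr := H.nonneg n
  calc h (n + 3) * r (n + 2) ≤ h (n + 3) * (√δ * r n + e n) :=
        mul_le_mul_of_nonneg_left ((H.le_add n).trans (by gcongr)) (H.weight_pos _).le
    _ = h (n + 3) * (√δ * r n) + h (n + 3) * e n := by ring
    _ ≤ B * h (n + 1) * (√δ * r n) + h (n + 3) * e n := by gcongr
    _ = B * √δ * (h (n + 1) * r n) + h (n + 3) * e n := by ring
    _ ≤ 1 / 2 * (h (n + 1) * r n) + h (n + 3) * e n := by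
        gcongr
        exact H.weight_mul_nonneg _ _
    _ = h (n + 1) * r n / 2 + h (n + 3) * e n := by ring

theorem eventually_weight_mul_le (H : IsDampedRecursion h r e) (hmono : Monotone h)
    (he : Summable e) (hhe : Tendsto (fun n => h (n + 3) * e n) atTop (𝓝 0))
    (hdiv : ¬ Summable fun n => (h n)⁻¹) {B η : ℝ} (hgrowth : ∀ᶠ n in atTop, h (n + 2) ≤ B * h n)
    (hη : 0 < η) (hBη : B * √η ≤ 1 / 2) : ∀ᶠ n in atTop, h (n + 1) * r n ≤ η := by
  have hfreq : ∃ᶠ n in atTop, h (n + 1) * r n ≤ η ∧ h (n + 2) * r (n + 1) ≤ η := by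
    refine (H.frequently_weight_mul_max_lt hmono he hhe hdiv hη).mono fun n hn => ⟨?_, ?_⟩
    · exact (mul_le_mul (hmono (by lia)) (le_max_left _ _) (H.nonneg _)
        (H.weight_pos _).le).trans hn.le
    · exact (mul_le_mul (hmono (by lia)) (le_max_right _ _) (H.nonneg _)
        (H.weight_pos _).le).trans hn.le
  refine (eventually_of_frequently_of_succ hfreq ?_).mono fun n hn => hn.1
  filter_upwards [(tendsto_add_atTop_nat 1).eventually hgrowth,
    hhe.eventually_le_const (half_pos hη)] with n hB hen
  rintro ⟨hn, hn'⟩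
  exact ⟨hn', (H.weight_mul_add_two_le hB hBη hn').trans (by linarith)⟩

theorem tendsto_weight_mul_zero (H : IsDampedRecursion h r e) (hmono : Monotone h)
    (hgrowth : (fun n => h (n + 1)) =O[atTop] h) (he : Summable e)
    (hhe : Tendsto (fun n => h (n + 2) * e n) atTop (𝓝 0))
    (hdiv : ¬ Summable fun n => (h n)⁻¹) :
    Tendsto (fun n => h (n + 1) * r n) atTop (𝓝 0) := by
  have hhe' : Tendsto (fun n => h (n + 3) * e n) atTop (𝓝 0) :=
    ((hgrowth.comp_tendsto (tendsto_add_atTop_nat 2)).mul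
      (Asymptotics.isBigO_refl e atTop)).trans_tendsto hhe
  obtain ⟨B, hB⟩ := ((hgrowth.comp_tendsto (tendsto_add_atTop_nat 1)).trans hgrowth).bound
  have hgrowth_two : ∀ᶠ n in atTop, h (n + 2) ≤ B * h n := by
    filter_upwards [hB] with n hn
    simpa only [Function.comp_apply, Real.norm_of_nonneg (H.weight_pos _).le] using hn
  refine tendsto_order.2 ⟨fun a ha => .of_forall fun n => ha.trans_le (H.weight_mul_nonneg _ _),
    fun ε hε => ?_⟩
  have hsqrt : Tendsto (fun η => B * √η) (𝓝[>] 0) (𝓝 0) :=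
    (Continuous.tendsto' (by fun_prop) 0 0 (by simp)).mono_left nhdsWithin_le_nhds
  obtain ⟨η, hBη, hη, hηε⟩ :=
    ((hsqrt.eventually_le_const one_half_pos).and (Ioo_mem_nhdsGT hε)).exists
  exact (H.eventually_weight_mul_le hmono he hhe' hdiv hgrowth_two hη hBη).mono
    fun n hn => hn.trans_lt hηε

end IsDampedRecursion

theorem isBigO_rpow_of_antitoneOn {g : ℕ → ℝ} {b s : ℝ} {N : ℕ} (hb : 0 < b)
    (hg : ∀ᶠ n in atTop, 0 ≤ g n)
    (hanti : AntitoneOn (fun n : ℕ => g n * b ^ (-s * n)) (Ici N)) :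
    g =O[atTop] fun n : ℕ => b ^ (s * n) := by
  refine .of_bound (g N * b ^ (-s * N)) ?_
  filter_upwards [hg, eventually_ge_atTop N] with n hgn hn
  rw [Real.norm_of_nonneg hgn, Real.norm_of_nonneg (by positivity)]
  calc g n = g n * b ^ (-s * n) * b ^ (s * n) := by
        rw [mul_assoc, ← Real.rpow_add hb, neg_mul, neg_add_cancel, Real.rpow_zero, mul_one]
    _ ≤ g N * b ^ (-s * N) * b ^ (s * n) :=
        mul_le_mul_of_nonneg_right (hanti self_mem_Ici hn hn) (by positivity)

theorem isBigO_succ_of_antitoneOn {g : ℕ → ℝ} {b s : ℝ} {N : ℕ} (hb : 0 < b)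
    (hg : ∀ᶠ n in atTop, 0 ≤ g n)
    (hanti : AntitoneOn (fun n : ℕ => g n * b ^ (-s * n)) (Ici N)) :
    (fun n => g (n + 1)) =O[atTop] g := by
  refine .of_bound (b ^ s) ?_
  filter_upwards [hg, (tendsto_add_atTop_nat 1).eventually hg, eventually_ge_atTop N]
    with n hgn hgn_succ hn
  rw [Real.norm_of_nonneg hgn_succ, Real.norm_of_nonneg hgn]
  have hpow : b ^ (-s * n) = b ^ s * b ^ (-s * (n + 1 : ℕ)) := by
    rw [← Real.rpow_add hb]
    push_cast
    ring_nf
  refine le_of_mul_le_mul_right ?_ (Real.rpow_pos_of_pos hb (-s * (n + 1 : ℕ)))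
  calc g (n + 1) * b ^ (-s * (n + 1 : ℕ)) ≤ g n * b ^ (-s * n) :=
        hanti hn (hn.trans n.le_succ) n.le_succ
    _ = b ^ s * g n * b ^ (-s * (n + 1 : ℕ)) := by rw [hpow]; ring

theorem tail2_nonneg (x : ℕ → ℝ) (n : ℕ) : 0 ≤ tail2 x n := tsum_nonneg fun _ => sq_nonneg _

namespace MemHs

variable {s : ℝ} {x : ℕ → ℝ}

theorem sq_two_rpow_mul_tail2_le (hx : MemHs s x) (hs : 0 ≤ s) (n : ℕ) :
    ((2 : ℝ) ^ (s * (n + 1))) ^ 2 * tail2 x (n + 1) ≤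
      ∑' i : ℕ, (2 : ℝ) ^ (2 * s * ((i + n : ℕ) + 1)) * x (i + n + 1) ^ 2 := by
  have hle (i : ℕ) : ((2 : ℝ) ^ (s * (n + 1))) ^ 2 * x (n + 1 + i) ^ 2 ≤
      (2 : ℝ) ^ (2 * s * ((i + n : ℕ) + 1)) * x (i + n + 1) ^ 2 := by
    rw [← Real.rpow_mul_natCast zero_le_two, show n + 1 + i = i + n + 1 by lia]
    refine mul_le_mul_of_nonneg_right (Real.rpow_le_rpow_of_exponent_le one_le_two ?_)
      (sq_nonneg _)
    push_cast
    linarith [mul_nonneg hs (i.cast_nonneg (α := ℝ))]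
  have hsum := (summable_nat_add_iff n).2 hx
  rw [tail2, ← tsum_mul_left]
  exact (hsum.of_nonneg_of_le (fun i => by positivity) hle).tsum_le_tsum hle hsum

theorem sqrt_tail2_isLittleO (hx : MemHs s x) (hs : 0 ≤ s) :
    (fun n => √(tail2 x n)) =o[atTop] fun n : ℕ => (2 : ℝ) ^ (-s * n) := by
  have hweighted : Tendsto (fun n => √(∑' i : ℕ,
      (2 : ℝ) ^ (2 * s * ((i + n : ℕ) + 1)) * x (i + n + 1) ^ 2)) atTop (𝓝 0) := by
    simpa only [Real.sqrt_zero] using (tendsto_sum_nat_add fun i : ℕ =>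
      (2 : ℝ) ^ (2 * s * ((i : ℝ) + 1)) * x (i + 1) ^ 2).sqrt
  refine Asymptotics.isLittleO_of_tendsto (fun n hn => absurd hn (by positivity)) <|
    (tendsto_add_atTop_iff_nat 1).1 <|
      squeeze_zero (fun n => by positivity) (fun n => Real.le_sqrt_of_sq_le ?_) hweighted
  rw [div_pow, Real.sq_sqrt (tail2_nonneg _ _), neg_mul, Real.rpow_neg zero_le_two, inv_pow,
    div_inv_eq_mul, mul_comm]
  exact_mod_cast hx.sq_two_rpow_mul_tail2_le hs n

theorem summable_sqrt_tail2 (hx : MemHs s x) (hs : 0 < s) : Summable fun n => √(tail2 x n) := by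
  have hratio : (2 : ℝ) ^ (-s) < 1 :=
    Real.rpow_lt_one_of_one_lt_of_neg one_lt_two (neg_neg_of_pos hs)
  refine summable_of_isBigO_nat (summable_geometric_of_lt_one (by positivity) hratio) ?_
  simpa only [Real.rpow_mul_natCast zero_le_two] using (hx.sqrt_tail2_isLittleO hs.le).isBigO

theorem tendsto_mul_sqrt_tail2 (hx : MemHs s x) (hs : 0 ≤ s) {g : ℕ → ℝ}
    (hg : g =O[atTop] fun n : ℕ => (2 : ℝ) ^ (s * n)) :
    Tendsto (fun n => g n * √(tail2 x n)) atTop (𝓝 0) := by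
  refine (Asymptotics.isLittleO_one_iff ℝ).1 <|
    (hg.mul_isLittleO (hx.sqrt_tail2_isLittleO hs)).congr_right fun n => ?_
  rw [← Real.rpow_add two_pos, neg_mul, add_neg_cancel, Real.rpow_zero]

end MemHs

section BoundSeq

variable {Φ : ℝ} {g : ℕ → ℝ}

theorem Cfun_eq_div_one_add (n : ℕ) (v : ℝ) :
    Cfun Φ g n v = (Φ / 2 * g n * v) / (1 + Φ / 2 * g n * v) := by
  rw [Cfun, show g n * Φ * v / 2 = Φ / 2 * g n * v by ring]

theorem tendsto_Cfun_zero {α : Type*} {l : Filter α} {k : α → ℕ} {v : α → ℝ}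
    (hv : Tendsto (fun a => Φ / 2 * g (k a) * v a) l (𝓝 0)) :
    Tendsto (fun a => Cfun Φ g (k a) (v a)) l (𝓝 0) := by
  have hden : Tendsto (fun a => 1 + Φ / 2 * g (k a) * v a) l (𝓝 1) := by
    simpa only [add_zero] using hv.const_add 1
  simp only [Cfun_eq_div_one_add]
  simpa only [zero_div] using! hv.div hden one_ne_zero

theorem Cfun_nonneg {n : ℕ} {v : ℝ} (hΦ : 0 ≤ Φ) (hg : 0 ≤ g n) (hv : 0 ≤ v) :
    0 ≤ Cfun Φ g n v := by
  unfold Cfun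
  positivity

theorem boundSeq_nonneg (hΦ : 0 ≤ Φ) (hg : ∀ n, 1 ≤ n → 0 ≤ g n) (x : ℕ → ℝ) :
    ∀ n, 0 ≤ boundSeq Φ g x n
  | 0 => le_rfl
  | 1 | 2 => mul_nonneg zero_le_two (tail2_nonneg x 1)
  | n + 3 => add_nonneg
      (mul_nonneg (Cfun_nonneg hΦ (hg _ (by lia)) (Real.sqrt_nonneg _))
        (boundSeq_nonneg hΦ hg x (n + 1)))
      (tail2_nonneg x _)

theorem isDampedRecursion_sqrt_boundSeq (hΦ : 0 < Φ) (hg : ∀ n, 1 ≤ n → 0 < g n) (x : ℕ → ℝ) :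
    IsDampedRecursion (fun n => Φ / 2 * g (n + 1)) (fun n => √(boundSeq Φ g x (n + 1)))
      (fun n => √(tail2 x (n + 3))) where
  weight_pos n := mul_pos (half_pos hΦ) (hg _ n.succ_pos)
  nonneg _ := Real.sqrt_nonneg _
  le_add n := by
    have hC := Cfun_nonneg hΦ.le (hg (n + 3) (by lia)).le
      (Real.sqrt_nonneg (boundSeq Φ g x (n + 2)))
    rw [← Cfun_eq_div_one_add, ← Real.sqrt_mul hC]
    exact sqrt_add_le_add_sqrt
      (mul_nonneg hC (boundSeq_nonneg hΦ.le (fun m hm => (hg m hm).le) x _)) (tail2_nonneg x _)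

theorem boundSeq_coefficients_tendsto_zero_general {s : ℝ} {x : ℕ → ℝ} (hs : 0 < s)
    (hx : MemHs s x) (hΦ_nonneg : 0 ≤ Φ) (hg : ∀ n, 1 ≤ n → 0 < g n)
    (hmono : MonotoneOn g (Ici 1)) (hsucc : (fun n => g (n + 1)) =O[atTop] g)
    (hpow : g =O[atTop] fun n : ℕ => (2 : ℝ) ^ (s * n))
    (hdiv : ¬ Summable fun n => (g (n + 1))⁻¹) :
    Tendsto (fun n => Cfun Φ g (n + 3) (√(boundSeq Φ g x (n + 2)))) atTop (𝓝 0) := by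
  rcases hΦ_nonneg.eq_or_lt with rfl | hΦ
  · simp [Cfun]
  have hweight_mono : Monotone fun n => Φ / 2 * g (n + 1) := fun n m hnm =>
    mul_le_mul_of_nonneg_left (hmono n.succ_pos m.succ_pos (by lia)) (half_pos hΦ).le
  have hweight_growth : (fun n => Φ / 2 * g (n + 2)) =O[atTop] fun n => Φ / 2 * g (n + 1) :=
    ((hsucc.comp_tendsto (tendsto_add_atTop_nat 1)).const_mul_left _).const_mul_right
      (half_pos hΦ).ne'
  have herror : Tendsto (fun n => Φ / 2 * g (n + 3) * √(tail2 x (n + 3))) atTop (𝓝 0) := by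
    simpa only [Function.comp_apply, mul_assoc, mul_zero] using
      ((hx.tendsto_mul_sqrt_tail2 hs.le hpow).comp (tendsto_add_atTop_nat 3)).const_mul (Φ / 2)
  have hweight_div : ¬ Summable fun n => (Φ / 2 * g (n + 1))⁻¹ := by
    simpa only [mul_inv, summable_mul_left_iff (inv_pos.2 (half_pos hΦ)).ne'] using hdiv
  have hproduct := (isDampedRecursion_sqrt_boundSeq hΦ hg x).tendsto_weight_mul_zero
    hweight_mono hweight_growth ((summable_nat_add_iff 3).2 (hx.summable_sqrt_tail2 hs)) herror
    hweight_div
  exact tendsto_Cfun_zero (hproduct.comp (tendsto_add_atTop_nat 1))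

end BoundSeq

/-- The coefficients `cₙ = Cₙ(√y_{n-1})` tend to `0` as `n → ∞`
(stated for `n ≥ 3`, i.e. along `n = m + 3`). -/
theorem boundSeq_coefficients_tendsto_zero
    (β : ℝ) (hβ : 0 < β) (φ g : ℕ → ℝ)
    (hφbdd : BddAbove (Set.range fun n : ℕ => |φ (n + 1)|))
    (hgpos : ∀ n : ℕ, 1 ≤ n → 0 < g n)
    (s : ℝ) (hs : 0 < s) (x : ℕ → ℝ) (hx : MemHs s x)
    (hgmono : ∀ n m : ℕ, 1 ≤ n → n ≤ m → g n ≤ g m)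
    (hgs : ∃ N : ℕ, ∀ n m : ℕ, N ≤ n → n ≤ m →
      g m * (2 : ℝ) ^ (-s * (m : ℝ)) ≤ g n * (2 : ℝ) ^ (-s * (n : ℝ)))
    (hgdiv : ¬ Summable fun n : ℕ => (g (n + 1))⁻¹) :
    Filter.Tendsto
      (fun n : ℕ =>
        Cfun (phiNorm φ) g (n + 3) (Real.sqrt (boundSeq (phiNorm φ) g x (n + 2))))
      Filter.atTop (nhds 0) := by
  obtain ⟨N, hN⟩ := hgs
  have hanti : AntitoneOn (fun n : ℕ => g n * (2 : ℝ) ^ (-s * n)) (Ici N) :=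
    fun n hn m _ hnm => hN n m hn hnm
  have hg : ∀ᶠ n in atTop, 0 ≤ g n := eventually_atTop.2 ⟨1, fun n hn => (hgpos n hn).le⟩
  exact boundSeq_coefficients_tendsto_zero_general hs hx
    (Real.iSup_nonneg fun _ => abs_nonneg _) hgpos (fun n hn m _ hnm => hgmono n m hn hnm)
    (isBigO_succ_of_antitoneOn two_pos hg hanti)
    (isBigO_rpow_of_antitoneOn two_pos hg hanti) hgdiv
end

section
/- Assume that n·g_n/k_n → 0 as n → ∞. If x ∈ ℓ² and Z is the solution of the linear system Z_n'(t) = −(k_n/g_n) Z_n(t), Z_n(0) = x_n (explicitly Z_n(t) = x_n exp(−(k_n/g_n) t)), then for every ε>0 and every s>0, Z ∈ L^∞([ε,∞); H^s), i.e. sup_{t≥ε} ∑_{n≥1} 2^{2sn} Z_n(t)² < ∞. -/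
open scoped BigOperators ENNReal
open MeasureTheory Filter Set Topology

/-!
On `[ε, ∞)` the multiplier `b ^ (2 * s * ν i) * exp (-rate i * t) ^ 2`, which relates `∑ xᵢ²` to
the squared weighted norm at time `t`, is largest at `t = ε`. There it equals
`exp (c * ν i - δ * rate i)` with `c = 2 * s * log b` and `δ = 2 * ε`; since `ν` is negligible
against `rate`, this is at most `1` for all but finitely many `i`, hence bounded.
-/

section BoundedMultiplier

variable {ι : Type*}

lemma bddAbove_range_exp_sub_of_isLittleO {ν rate : ι → ℝ} (hrate : ∀ i, 0 ≤ rate i)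
    (hν : ν =o[cofinite] rate) (c : ℝ) {δ : ℝ} (hδ : 0 < δ) :
    BddAbove (range fun i => Real.exp (c * ν i - δ * rate i)) := by
  have eventually_le_one : ∀ᶠ i in cofinite, Real.exp (c * ν i - δ * rate i) ≤ 1 := by
    filter_upwards [(hν.const_mul_left c).bound hδ] with i hi
    rw [Real.norm_of_nonneg (hrate i)] at hi
    exact Real.exp_le_one_iff.2 (sub_nonpos.2 ((Real.le_norm_self _).trans hi))
  exact (isBoundedUnder_of_eventually_le eventually_le_one).bddAbove_range_of_cofinite

lemma rpow_mul_exp_sq_eq_exp_sub {b : ℝ} (hb : 0 < b) (s ν r t : ℝ) :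
    b ^ (2 * s * ν) * Real.exp (-r * t) ^ 2
      = Real.exp (2 * s * Real.log b * ν - 2 * t * r) := by
  rw [Real.rpow_def_of_pos hb, ← Real.exp_nat_mul, ← Real.exp_add]
  congr 1
  push_cast
  ring

lemma exists_forall_rpow_mul_exp_sq_le {b : ℝ} (hb : 0 < b) {ν rate : ι → ℝ}
    (hrate : ∀ i, 0 ≤ rate i) (hν : ν =o[cofinite] rate) {ε : ℝ} (hε : 0 < ε) (s : ℝ) :
    ∃ C, ∀ t, ε ≤ t → ∀ i, b ^ (2 * s * ν i) * Real.exp (-rate i * t) ^ 2 ≤ C := by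
  obtain ⟨C, hC⟩ :=
    bddAbove_range_exp_sub_of_isLittleO hrate hν (2 * s * Real.log b) (mul_pos two_pos hε)
  refine ⟨C, fun t ht i => ?_⟩
  calc b ^ (2 * s * ν i) * Real.exp (-rate i * t) ^ 2
      = Real.exp (2 * s * Real.log b * ν i - 2 * t * rate i) :=
        rpow_mul_exp_sq_eq_exp_sub hb s (ν i) (rate i) t
    _ ≤ Real.exp (2 * s * Real.log b * ν i - 2 * ε * rate i) := by
        have := hrate i
        gcongr
    _ ≤ C := hC (mem_range_self i)

lemma summable_mul_and_tsum_mul_le {m y : ι → ℝ} {C : ℝ} (hm : ∀ i, 0 ≤ m i)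
    (hmC : ∀ i, m i ≤ C) (hy : ∀ i, 0 ≤ y i) (hsum : Summable y) :
    Summable (fun i => m i * y i) ∧ ∑' i, m i * y i ≤ C * ∑' i, y i := by
  have mul_le : ∀ i, m i * y i ≤ C * y i := fun i => mul_le_mul_of_nonneg_right (hmC i) (hy i)
  have summable_mul : Summable fun i => m i * y i :=
    .of_nonneg_of_le (fun i => mul_nonneg (hm i) (hy i)) mul_le (hsum.mul_left C)
  refine ⟨summable_mul, ?_⟩
  rw [← tsum_mul_left]
  exact summable_mul.tsum_le_tsum mul_le (hsum.mul_left C)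

theorem linear_semigroup_smoothing_general {b : ℝ} (hb : 0 < b) {ν rate : ι → ℝ}
    (hrate : ∀ i, 0 ≤ rate i) (hν : ν =o[cofinite] rate) {ε : ℝ} (hε : 0 < ε) (s : ℝ) :
    ∃ C, ∀ x : ι → ℝ, (Summable fun i => x i ^ 2) → ∀ t, ε ≤ t →
      Summable (fun i => b ^ (2 * s * ν i) * (x i * Real.exp (-rate i * t)) ^ 2) ∧
      ∑' i, b ^ (2 * s * ν i) * (x i * Real.exp (-rate i * t)) ^ 2 ≤ C * ∑' i, x i ^ 2 := by
  obtain ⟨C, hC⟩ := exists_forall_rpow_mul_exp_sq_le hb hrate hν hε s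
  refine ⟨C, fun x hx t ht => ?_⟩
  have multiplier_form : ∀ i, b ^ (2 * s * ν i) * (x i * Real.exp (-rate i * t)) ^ 2
      = b ^ (2 * s * ν i) * Real.exp (-rate i * t) ^ 2 * x i ^ 2 := fun i => by ring
  simp only [multiplier_form]
  exact summable_mul_and_tsum_mul_le (fun i => by positivity) (hC t ht)
    (fun i => sq_nonneg (x i)) hx

end BoundedMultiplier

lemma kk_pos (β : ℝ) (n : ℕ) : 0 < kk β n :=
  Real.rpow_pos_of_pos two_pos _

lemma kk_succ_div_pos (β : ℝ) {g : ℕ → ℝ} (hgpos : ∀ n, 1 ≤ n → 0 < g n) (n : ℕ) :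
    0 < kk β (n + 1) / g (n + 1) :=
  div_pos (kk_pos β (n + 1)) (hgpos (n + 1) n.succ_pos)

lemma natCast_add_one_isLittleO_kk_succ_div {β : ℝ} {g : ℕ → ℝ}
    (hgpos : ∀ n, 1 ≤ n → 0 < g n)
    (hng : Tendsto (fun n : ℕ => (n : ℝ) * g n / kk β n) atTop (𝓝 0)) :
    (fun n : ℕ => (n : ℝ) + 1) =o[cofinite] fun n => kk β (n + 1) / g (n + 1) := by
  rw [Nat.cofinite_eq_atTop]
  refine Asymptotics.isLittleO_of_tendsto
    (fun n h => absurd h (kk_succ_div_pos β hgpos n).ne') ?_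
  simpa only [div_div_eq_mul_div, Nat.cast_add, Nat.cast_one]
    using (tendsto_add_atTop_iff_nat 1).2 hng

/-- Smoothing for the linear semigroup: if `n·gₙ/kₙ → 0` and `x ∈ ℓ²`, then
`Zₙ(t) = xₙ e^{-(kₙ/gₙ)t}` belongs to `L^∞([ε,∞); Hˢ)` for all `ε, s > 0`. -/
theorem linear_semigroup_smoothing
    (β : ℝ) (hβ : 0 < β) (g : ℕ → ℝ)
    (hgpos : ∀ n : ℕ, 1 ≤ n → 0 < g n)
    (hgmono : ∀ n m : ℕ, 1 ≤ n → n ≤ m → g n ≤ g m)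
    (hkg : ∃ N : ℕ, ∀ n m : ℕ, N ≤ n → n ≤ m → kk β n / g n ≤ kk β m / g m)
    (hng : Filter.Tendsto (fun n : ℕ => (n : ℝ) * g n / kk β n) Filter.atTop (nhds 0))
    (x : ℕ → ℝ) (hx : Summable fun n : ℕ => (x (n + 1)) ^ 2) :
    ∀ ε : ℝ, 0 < ε → ∀ s : ℝ, 0 < s → ∃ M : ℝ, ∀ t : ℝ, ε ≤ t →
      Summable (fun n : ℕ => (2 : ℝ) ^ (2 * s * ((n : ℝ) + 1))
        * (x (n + 1) * Real.exp (-(kk β (n + 1) / g (n + 1)) * t)) ^ 2) ∧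
      (∑' n : ℕ, (2 : ℝ) ^ (2 * s * ((n : ℝ) + 1))
        * (x (n + 1) * Real.exp (-(kk β (n + 1) / g (n + 1)) * t)) ^ 2) ≤ M := by
  intro ε hε s _
  obtain ⟨C, hC⟩ := linear_semigroup_smoothing_general two_pos
    (fun n => (kk_succ_div_pos β hgpos n).le)
    (natCast_add_one_isLittleO_kk_succ_div hgpos hng) hε s
  exact ⟨_, hC _ hx⟩
end

section
/- Let X = (X_{i,n})_{i∈{1,2,3,4}, n≥1} be a solution of the vector-valued averaged dyadic system with α = γ, and set X_n² := X_{1,n}² + X_{2,n}² + X_{3,n}² + X_{4,n}². Then for every n≥1 and t>0, (1/2) d/dt (X_n²) = −(k_n^α/g_n) X_n² + C₄ ( k_n^γ X_{4,n-1}² X_{1,n} − k_{n+1}^γ X_{4,n}² X_{1,n+1} ); in particular all the terms involving C₁, C₂, C₃, C₅ cancel. -/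
open scoped BigOperators ENNReal
open MeasureTheory Filter Set Topology

/-!
Pair the system of one shell with `X = (X₁, X₂, X₃, X₄)`. The damping contributes `-ν |X|²`.
The quadratic terms belonging to `C₁`, `C₂`, `C₃` and `C₅` each exchange energy between two
components of the same shell, so the gain of one is the loss of the other. Only `C₄` couples
neighbouring shells: it leaves the energy received by `X₁` from the previous shell minus the energy
lost by `X₄` to the next one.
-/

section Shell

variable {𝕜 𝔸 : Type*} [NontriviallyNormedField 𝕜] [NormedCommRing 𝔸] [NormedAlgebra 𝕜 𝔸]
  {s : Set 𝕜} {t : 𝕜}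

theorem hasDerivWithinAt_sq_of_damped {x : 𝕜 → 𝔸} {ν f : 𝔸}
    (hx : HasDerivWithinAt x (-ν * x t + f) s t) :
    HasDerivWithinAt (fun u => x u ^ 2) (2 * (-ν * x t ^ 2 + x t * f)) s t :=
  (hx.fun_pow 2).congr_deriv (by push_cast; ring)

theorem averaged_dyadic_energy_flux {R : Type*} [CommRing R]
    (C₁ C₂ C₃ C₄ C₅ κ κNext x₁ x₂ x₃ x₄ x₄Prev x₁Next : R) :
    x₁ * (κ * (-C₁ * x₃ * x₄ - C₂ * x₁ * x₂ - C₃ * x₁ * x₃ + C₄ * x₄Prev ^ 2))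
        + x₂ * (κ * (C₂ * x₁ ^ 2 - C₅ * x₃ ^ 2))
        + x₃ * (κ * (C₃ * x₁ ^ 2 + C₅ * x₂ * x₃))
        + x₄ * (κ * C₁ * x₁ * x₃ - κNext * C₄ * x₄ * x₁Next)
      = C₄ * (κ * x₄Prev ^ 2 * x₁ - κNext * x₄ ^ 2 * x₁Next) := by
  ring

/- One shell at one time: `ν` is `kₙ^α / gₙ`, `κ` and `κNext` are `kₙ^γ` and `kₙ₊₁^γ`, and the
neighbouring shells enter only through the values `x₄Prev` of `X₄,ₙ₋₁` and `x₁Next` of `X₁,ₙ₊₁`. -/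
theorem averaged_dyadic_energy_identity_general
    {C₁ C₂ C₃ C₄ C₅ ν κ κNext x₄Prev x₁Next : 𝔸} {x₁ x₂ x₃ x₄ : 𝕜 → 𝔸}
    (h₁ : HasDerivWithinAt x₁
      (-ν * x₁ t + κ * (-C₁ * x₃ t * x₄ t - C₂ * x₁ t * x₂ t - C₃ * x₁ t * x₃ t
        + C₄ * x₄Prev ^ 2)) s t)
    (h₂ : HasDerivWithinAt x₂ (-ν * x₂ t + κ * (C₂ * x₁ t ^ 2 - C₅ * x₃ t ^ 2)) s t)
    (h₃ : HasDerivWithinAt x₃ (-ν * x₃ t + κ * (C₃ * x₁ t ^ 2 + C₅ * x₂ t * x₃ t)) s t)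
    (h₄ : HasDerivWithinAt x₄
      (-ν * x₄ t + κ * C₁ * x₁ t * x₃ t - κNext * C₄ * x₄ t * x₁Next) s t) :
    HasDerivWithinAt (fun u => x₁ u ^ 2 + x₂ u ^ 2 + x₃ u ^ 2 + x₄ u ^ 2)
      (2 * (-ν * (x₁ t ^ 2 + x₂ t ^ 2 + x₃ t ^ 2 + x₄ t ^ 2)
        + C₄ * (κ * x₄Prev ^ 2 * x₁ t - κNext * x₄ t ^ 2 * x₁Next))) s t := by
  rw [add_sub_assoc] at h₄
  have energy_deriv := (((hasDerivWithinAt_sq_of_damped h₁).fun_add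
    (hasDerivWithinAt_sq_of_damped h₂)).fun_add
    (hasDerivWithinAt_sq_of_damped h₃)).fun_add (hasDerivWithinAt_sq_of_damped h₄)
  refine energy_deriv.congr_deriv ?_
  rw [← averaged_dyadic_energy_flux C₁ C₂ C₃ C₄ C₅]
  ring

end Shell

/-- For the vector-valued averaged dyadic system with `α = γ`, the energy
`Xₙ² = X₁ₙ² + X₂ₙ² + X₃ₙ² + X₄ₙ²` satisfies
`(1/2)(Xₙ²)' = −(kₙ^α/gₙ)Xₙ² + C₄(kₙ^γ X₄,ₙ₋₁² X₁,ₙ − k_{n+1}^γ X₄,ₙ² X₁,ₙ₊₁)`. -/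
theorem averaged_dyadic_energy_identity
    (β : ℝ) (hβ : 0 < β) (g : ℕ → ℝ)
    (hgpos : ∀ n : ℕ, 1 ≤ n → 0 < g n)
    (α γ : ℝ) (hα : 0 < α) (hγ : 0 < γ) (hαγ : α = γ)
    (C₁ C₂ C₃ C₄ C₅ : ℝ)
    (X1 X2 X3 X4 : ℕ → ℝ → ℝ)
    (h0 : ∀ t : ℝ, X1 0 t = 0 ∧ X2 0 t = 0 ∧ X3 0 t = 0 ∧ X4 0 t = 0)
    (hd1 : ∀ n : ℕ, 1 ≤ n → ∀ t : ℝ, 0 ≤ t →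
      HasDerivWithinAt (X1 n)
        (-(kk β n ^ α / g n) * X1 n t
          + kk β n ^ γ * (-C₁ * X3 n t * X4 n t - C₂ * X1 n t * X2 n t
              - C₃ * X1 n t * X3 n t + C₄ * (X4 (n - 1) t) ^ 2)) (Set.Ici 0) t)
    (hd2 : ∀ n : ℕ, 1 ≤ n → ∀ t : ℝ, 0 ≤ t →
      HasDerivWithinAt (X2 n)
        (-(kk β n ^ α / g n) * X2 n t
          + kk β n ^ γ * (C₂ * (X1 n t) ^ 2 - C₅ * (X3 n t) ^ 2)) (Set.Ici 0) t)
    (hd3 : ∀ n : ℕ, 1 ≤ n → ∀ t : ℝ, 0 ≤ t →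
      HasDerivWithinAt (X3 n)
        (-(kk β n ^ α / g n) * X3 n t
          + kk β n ^ γ * (C₃ * (X1 n t) ^ 2 + C₅ * X2 n t * X3 n t)) (Set.Ici 0) t)
    (hd4 : ∀ n : ℕ, 1 ≤ n → ∀ t : ℝ, 0 ≤ t →
      HasDerivWithinAt (X4 n)
        (-(kk β n ^ α / g n) * X4 n t
          + kk β n ^ γ * C₁ * X1 n t * X3 n t
          - kk β (n + 1) ^ γ * C₄ * X4 n t * X1 (n + 1) t) (Set.Ici 0) t) :
    ∀ n : ℕ, 1 ≤ n → ∀ t : ℝ, 0 < t →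
      HasDerivWithinAt
        (fun u : ℝ => (X1 n u) ^ 2 + (X2 n u) ^ 2 + (X3 n u) ^ 2 + (X4 n u) ^ 2)
        (2 * (-(kk β n ^ α / g n)
            * ((X1 n t) ^ 2 + (X2 n t) ^ 2 + (X3 n t) ^ 2 + (X4 n t) ^ 2)
          + C₄ * (kk β n ^ γ * (X4 (n - 1) t) ^ 2 * X1 n t
              - kk β (n + 1) ^ γ * (X4 n t) ^ 2 * X1 (n + 1) t)))
        (Set.Ici 0) t := by
  intro n hn t ht
  exact averaged_dyadic_energy_identity_general
    (hd1 n hn t ht.le) (hd2 n hn t ht.le) (hd3 n hn t ht.le) (hd4 n hn t ht.le)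
end
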